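/- Let B ≤ GL(n,ℂ) be the subgroup of invertible lower-triangular matrices, and let R be a subset of the space of bilinear maps ℂⁿ × ℂⁿ → ℂⁿ which is closed in the standard topology and stable under the action of B (i.e., b·μ ∈ R for all b ∈ B, μ ∈ R). If μ ∈ R and λ lies in the closure of the orbit O(μ), then there exists g ∈ GL(n,ℂ) such that g·λ ∈ R. -/

import Mathlib

open ContinuousLinearMap

/-- The underlying space `ℂⁿ`. -/
abbrev Vn (n : ℕ) := Fin n → ℂ

/-- The space of bilinear maps `ℂⁿ × ℂⁿ → ℂⁿ` (as continuous linear maps in two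
arguments), carrying its standard topology as a finite-dimensional complex vector space. -/
abbrev Bil (n : ℕ) := Vn n →L[ℂ] Vn n →L[ℂ] Vn n

/-- The action of `GL(n, ℂ)` on bilinear maps: `(g · μ)(x, y) = g (μ (g⁻¹ x) (g⁻¹ y))`. -/
noncomputable def act {n : ℕ} (g : Vn n ≃L[ℂ] Vn n) (μ : Bil n) : Bil n :=
  ((compL ℂ (Vn n) (Vn n) (Vn n)).flip (g.symm : Vn n →L[ℂ] Vn n)).comp
    (((compL ℂ (Vn n) (Vn n) (Vn n)) (g : Vn n →L[ℂ] Vn n)).comp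
      (μ.comp (g.symm : Vn n →L[ℂ] Vn n)))

@[simp] lemma act_apply {n : ℕ} (g : Vn n ≃L[ℂ] Vn n) (μ : Bil n) (x y : Vn n) :
    act g μ x y = g (μ (g.symm x) (g.symm y)) := rfl

/-- The orbit `O(μ)` of a bilinear map under the `GL(n, ℂ)`-action. -/
noncomputable def orbit {n : ℕ} (μ : Bil n) : Set (Bil n) :=
  {ν | ∃ g : Vn n ≃L[ℂ] Vn n, ν = act g μ}

/-- `g` is lower triangular: its matrix in the standard basis of `ℂⁿ` has zero
entries above the diagonal. -/
def IsLowerTriangular {n : ℕ} (g : Vn n ≃L[ℂ] Vn n) : Prop :=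
  ∀ i j : Fin n, i < j →
    LinearMap.toMatrix' ((g : Vn n →L[ℂ] Vn n) : Vn n →ₗ[ℂ] Vn n) i j = 0

/-!
Gram-Schmidt applied to the columns of a matrix, from the last to the first, shows that `GL(n)` is
the product of the compact group `K` of unitary matrices and the group `B` of lower-triangular
ones. Hence `GL(n) • R = K • (B • R) = K • R` for a `B`-stable set `R`; if `R` is closed, then so
is `K • R`, since `K` is compact, and it therefore contains the closures of the orbits of all
points of `R`.
-/

open Set
open scoped MatrixGroups Pointwise

section UnitaryGroup

variable {𝕜 ι : Type*} [RCLike 𝕜] [Fintype ι]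

lemma isCompact_unitaryGroup [DecidableEq ι] :
    IsCompact (Matrix.unitaryGroup ι 𝕜 : Set (Matrix ι ι 𝕜)) := by
  have hclosed : IsClosed (Matrix.unitaryGroup ι 𝕜 : Set (Matrix ι ι 𝕜)) := isClosed_unitary
  open scoped Matrix.Norms.Elementwise in
  exact
    have : ProperSpace (Matrix ι ι 𝕜) := FiniteDimensional.proper 𝕜 _
    (isCompact_closedBall 0 1).of_isClosed_subset hclosed fun _ hU ↦
      mem_closedBall_zero_iff.mpr (entrywise_sup_norm_bound_of_unitary hU)

lemma isCompact_range_toUnits_unitaryGroup [DecidableEq ι] :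
    IsCompact (range (Unitary.toUnits : Matrix.unitaryGroup ι 𝕜 → GL ι 𝕜)) :=
  have := isCompact_iff_compactSpace.mp (isCompact_unitaryGroup (𝕜 := 𝕜) (ι := ι))
  isCompact_range <| Units.continuous_iff.mpr
    ⟨continuous_subtype_val, continuous_subtype_val.comp continuous_inv⟩

variable [LinearOrder ι]

lemma exists_unitary_mul_isLowerTriangular (M : Matrix ι ι 𝕜) :
    ∃ U ∈ Matrix.unitaryGroup ι 𝕜, (U * M).IsLowerTriangular := by
  -- The order dual makes the triangular factor lower instead of upper.
  let _ : LocallyFiniteOrderBot ιᵒᵈ := .ofIic _ (fun a ↦ {b | b ≤ a}) (by simp)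
  let columns : ιᵒᵈ → EuclideanSpace 𝕜 ι := fun j ↦ WithLp.toLp 2 (M.col j.ofDual)
  have hcard : Module.finrank 𝕜 (EuclideanSpace 𝕜 ι) = Fintype.card ιᵒᵈ := by simp
  let b := InnerProductSpace.gramSchmidtOrthonormalBasis hcard columns
  let b' := b.reindex OrderDual.ofDual
  let e := EuclideanSpace.basisFun ι 𝕜
  have hM : e.toBasis.toMatrix (columns ∘ OrderDual.toDual) = M := by
    ext i j
    simp [e, columns, Module.Basis.toMatrix_apply]
  have htri : b'.toBasis.toMatrix (columns ∘ OrderDual.toDual) =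
      (b.toBasis.toMatrix columns).submatrix OrderDual.toDual OrderDual.toDual := by
    ext i j
    simp [b', Module.Basis.toMatrix_apply]
  refine ⟨b'.toBasis.toMatrix e, b'.toMatrix_orthonormalBasis_mem_unitary e, ?_⟩
  rw [← hM, ← e.coe_toBasis, Module.Basis.toMatrix_mul_toMatrix, htri]
  exact Matrix.BlockTriangular.submatrix
    (InnerProductSpace.gramSchmidtOrthonormalBasis_inv_isUpperTriangular hcard columns)

lemma range_toUnits_unitaryGroup_mul_isLowerTriangular :
    range (Unitary.toUnits : Matrix.unitaryGroup ι 𝕜 → GL ι 𝕜) *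
      {b : GL ι 𝕜 | b.val.IsLowerTriangular} = univ := by
  refine eq_univ_of_forall fun g ↦ ?_
  obtain ⟨U, hU, hUg⟩ := exists_unitary_mul_isLowerTriangular g.val
  let u : GL ι 𝕜 := Unitary.toUnits ⟨U, hU⟩
  exact mem_mul.mpr ⟨u⁻¹, ⟨⟨U, hU⟩⁻¹, map_inv _ _⟩, u * g, hUg, inv_mul_cancel_left u g⟩

end UnitaryGroup

lemma univ_smul_eq_of_mul_eq_univ {M X : Type*} [Monoid M] [MulAction M X] {K B : Set M}
    {R : Set X} (hKB : K * B = univ) (hB : B • R ⊆ R) : (univ : Set M) • R = K • R := by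
  refine Subset.antisymm ?_ (smul_subset_smul_right (subset_univ K))
  rw [← hKB, mul_smul]
  exact smul_subset_smul_left hB

theorem borel_stable_closed_subset_general {𝕜 ι X : Type*} [RCLike 𝕜] [Fintype ι] [LinearOrder ι]
    [TopologicalSpace X] [MulAction (GL ι 𝕜) X] [ContinuousSMul (GL ι 𝕜) X] {R : Set X}
    (hRclosed : IsClosed R)
    (hRstable : ∀ b : GL ι 𝕜, b.val.IsLowerTriangular → ∀ x ∈ R, b • x ∈ R)
    {y : X} (hy : y ∈ closure ((univ : Set (GL ι 𝕜)) • R)) :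
    ∃ U : Matrix.unitaryGroup ι 𝕜, (Unitary.toUnits U : GL ι 𝕜) • y ∈ R := by
  have hsmul := univ_smul_eq_of_mul_eq_univ range_toUnits_unitaryGroup_mul_isLowerTriangular
    (smul_subset_iff.mpr hRstable)
  have hclosed := hRclosed.smul_left_of_isCompact
    (isCompact_range_toUnits_unitaryGroup (𝕜 := 𝕜) (ι := ι))
  rw [hsmul, hclosed.closure_eq] at hy
  obtain ⟨_, ⟨U, rfl⟩, x, hx, rfl⟩ := mem_smul.mp hy
  exact ⟨U⁻¹, by rwa [map_inv, inv_smul_smul]⟩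

section BilinearMaps

variable {n : ℕ}

/-- The identification of `GL(n, ℂ)`, as a group of matrices, with the group of continuous linear
automorphisms of `ℂⁿ` in terms of which `act` is defined. -/
noncomputable def glEquiv (n : ℕ) : GL (Fin n) ℂ ≃* (Vn n ≃L[ℂ] Vn n) :=
  (Units.mapEquiv
    (Matrix.toLinAlgEquiv'.trans (Module.End.toContinuousLinearMap (Vn n))).toMulEquiv).trans
    (ContinuousLinearEquiv.unitsEquiv ℂ (Vn n))

lemma toMatrix'_glEquiv (g : GL (Fin n) ℂ) :
    LinearMap.toMatrix' ((glEquiv n g : Vn n →L[ℂ] Vn n) : Vn n →ₗ[ℂ] Vn n) = g.val :=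
  LinearMap.toMatrix'_toLin' g.val

lemma isLowerTriangular_glEquiv {g : GL (Fin n) ℂ} :
    IsLowerTriangular (glEquiv n g) ↔ g.val.IsLowerTriangular := by
  rw [IsLowerTriangular, toMatrix'_glEquiv]
  rfl

lemma act_one (μ : Bil n) : act 1 μ = μ := rfl

lemma act_mul (g h : Vn n ≃L[ℂ] Vn n) (μ : Bil n) : act (g * h) μ = act g (act h μ) := rfl

/-- The action `act`, transported to the group of invertible matrices, whose topology makes it a
continuous action. -/
noncomputable instance glSMul : SMul (GL (Fin n) ℂ) (Bil n) where
  smul g μ := act (glEquiv n g) μ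

lemma gl_smul_def (g : GL (Fin n) ℂ) (μ : Bil n) : g • μ = act (glEquiv n g) μ := rfl

noncomputable instance glMulAction : MulAction (GL (Fin n) ℂ) (Bil n) where
  one_smul μ := (congrArg (act · μ) (map_one (glEquiv n))).trans (act_one μ)
  mul_smul g h μ := (congrArg (act · μ) (map_mul (glEquiv n) g h)).trans (act_mul _ _ μ)

lemma continuous_coe_glEquiv :
    Continuous fun g : GL (Fin n) ℂ ↦ (glEquiv n g : Vn n →L[ℂ] Vn n) :=
  (Matrix.toLinAlgEquiv'.trans (Module.End.toContinuousLinearMap (Vn n))).toLinearMap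
    |>.continuous_of_finiteDimensional.comp Units.continuous_val

instance continuousSMul_gl : ContinuousSMul (GL (Fin n) ℂ) (Bil n) where
  continuous_smul := by
    have hg : Continuous fun p : GL (Fin n) ℂ × Bil n ↦ (glEquiv n p.1 : Vn n →L[ℂ] Vn n) :=
      continuous_coe_glEquiv.comp continuous_fst
    have hsymm : Continuous fun p : GL (Fin n) ℂ × Bil n ↦
        ((glEquiv n p.1).symm : Vn n →L[ℂ] Vn n) :=
      continuous_coe_glEquiv.comp continuous_fst.inv
    simp only [gl_smul_def, act]
    fun_prop

lemma orbit_subset_univ_smul {R : Set (Bil n)} {μ : Bil n} (hμ : μ ∈ R) :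
    orbit μ ⊆ (univ : Set (GL (Fin n) ℂ)) • R := by
  rintro _ ⟨g, rfl⟩
  rw [← (glEquiv n).apply_symm_apply g]
  exact smul_mem_smul (mem_univ _) hμ

end BilinearMaps

/-- If `R` is a closed subset of the space of bilinear maps, stable under the Borel
subgroup of lower-triangular invertible matrices, `μ ∈ R` and `λ` lies in the closure
of `O(μ)`, then some `GL(n, ℂ)`-translate of `λ` lies in `R`. -/
theorem borel_stable_closed_subset (n : ℕ) (R : Set (Bil n)) (hRclosed : IsClosed R)
    (hRstable : ∀ b : Vn n ≃L[ℂ] Vn n, IsLowerTriangular b → ∀ μ ∈ R, act b μ ∈ R)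
    (μ : Bil n) (hμ : μ ∈ R) (lam : Bil n) (hlam : lam ∈ closure (orbit μ)) :
    ∃ g : Vn n ≃L[ℂ] Vn n, act g lam ∈ R := by
  obtain ⟨U, hU⟩ := borel_stable_closed_subset_general hRclosed
    (fun b hb ↦ hRstable (glEquiv n b) (isLowerTriangular_glEquiv.mpr hb))
    (closure_mono (orbit_subset_univ_smul hμ) hlam)
  exact ⟨glEquiv n (Unitary.toUnits U), hU⟩
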